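/- Let G be a connected, non-complete strongly regular graph with parameters (v, k, λ, μ) with μ > 0, and set δ = √((λ−μ)^2 + 4(k−μ)), r = (λ−μ+δ)/2, Δ = ((v−1)(μ−λ) − 2k)/δ and f = (v−1+Δ)/2. Then there exists an injective map ψ from the vertex set of G to EuclideanSpace ℝ (Fin f) such that dist(ψ(u), ψ(v)) ≥ 1 for all u ≠ v, with equality exactly when u and v are adjacent; that is, G is the tangency graph of a unit ball packing in dimension f. -/

import Mathlib

open scoped Classical

theorem exists_gram_of_proj {V : Type*} [Fintype V] (E : Matrix V V ℝ) (hs : E.transpose = E)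
    (hE : E * E = E) (f : ℕ) (hf : E.trace = f) :
    ∃ φ : V → EuclideanSpace ℝ (Fin f), ∀ u w, dist (φ u) (φ w) ^ 2 = E u u + E w w - 2 * E u w := by
  have hid : IsIdempotentElem (Matrix.toEuclideanLin E) := by
    have := Matrix.toLpLin_mul_same 2 E E
    rw [hE] at this
    exact this.symm
  have htr := (LinearMap.IsIdempotentElem.isProj_range _ hid).trace
  have htr2 : LinearMap.trace ℝ _ (Matrix.toEuclideanLin E) = E.trace := by
    rw [Matrix.toEuclideanLin_eq_toLin, Matrix.trace_toLin_eq]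
  rw [htr2, hf] at htr
  have hfr : Module.finrank ℝ (LinearMap.range (Matrix.toEuclideanLin E)) = f := by
    exact_mod_cast htr.symm
  let iso := (stdOrthonormalBasis ℝ (LinearMap.range (Matrix.toEuclideanLin E))).reindex
    (finCongr hfr) |>.repr
  refine ⟨fun u => iso ⟨Matrix.toEuclideanLin E (EuclideanSpace.single u 1), ⟨_, rfl⟩⟩, ?_⟩
  intro u w
  have hsym : ∀ i j, E i j = E j i := fun i j => by
    conv_lhs => rw [← hs]
    rfl
  have hm : ∀ i j, ∑ x, E x i * E x j = E i j := fun i j => by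
    conv_rhs => rw [← hE]
    rw [Matrix.mul_apply]
    exact Finset.sum_congr rfl fun x _ => by rw [hsym x i]
  rw [iso.dist_map, Subtype.dist_eq, EuclideanSpace.dist_eq, Real.sq_sqrt (by positivity)]
  have : ∀ x, dist ((Matrix.toEuclideanLin E (EuclideanSpace.single u 1)) x)
      ((Matrix.toEuclideanLin E (EuclideanSpace.single w 1)) x) ^ 2 =
      E x u * E x u + E x w * E x w - 2 * (E x u * E x w) := by
    intro x
    rw [Real.dist_eq, sq_abs]
    simp [Matrix.toLpLin_apply]
    ring
  simp only [this, Finset.sum_sub_distrib, Finset.sum_add_distrib, ← Finset.mul_sum, hm]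

theorem srg_params {V : Type*} [Fintype V]
    (G : SimpleGraph V) (v k ℓ μ : ℕ)
    (hSRG : G.IsSRGWith v k ℓ μ) (hnc : G ≠ ⊤) (hμ : 0 < μ) :
    μ ≤ k ∧ ℓ + 2 ≤ k ∧ k * ((k : ℝ) - ℓ - 1) = ((v : ℝ) - k - 1) * μ ∧ 0 < v := by
  obtain ⟨u, w, hne, hna⟩ : ∃ u w, u ≠ w ∧ ¬ G.Adj u w := by
    by_contra! h
    apply hnc
    ext u w
    simp only [SimpleGraph.top_adj]
    exact ⟨fun h => h.ne, h u w⟩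
  have hv : 0 < v := by
    rw [← hSRG.card]; exact Fintype.card_pos_iff.2 ⟨u⟩
  have h1 : μ ≤ k := by
    rw [← hSRG.of_not_adj hne hna, ← hSRG.regular u]
    exact G.card_commonNeighbors_le_degree_left u w
  have h2 : k + 2 ≤ v := by
    have : (insert u (insert w (G.neighborFinset u))).card = k + 2 := by
      rw [Finset.card_insert_of_notMem, Finset.card_insert_of_notMem,
        SimpleGraph.card_neighborFinset_eq_degree, hSRG.regular u]
      · simpa using hna
      · simpa using hne
    rw [← this, ← hSRG.card]
    exact Finset.card_le_univ _
  have hp := SimpleGraph.IsSRGWith.param_eq G hSRG hv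
  have hpos : 0 < (v - k - 1) * μ := Nat.mul_pos (by omega) hμ
  have h3 : ℓ + 2 ≤ k := by
    by_contra h
    have : k - ℓ - 1 = 0 := by omega
    rw [this] at hp
    omega
  refine ⟨h1, h3, ?_, hv⟩
  have e1 : ((k - ℓ - 1 : ℕ) : ℝ) = (k : ℝ) - ℓ - 1 := by
    rw [Nat.cast_sub (by omega), Nat.cast_sub (by omega)]; simp
  have e2 : ((v - k - 1 : ℕ) : ℝ) = (v : ℝ) - k - 1 := by
    rw [Nat.cast_sub (by omega), Nat.cast_sub (by omega)]; simp
  rw [← e1, ← e2]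
  exact_mod_cast hp

theorem srg_sq {V : Type*} [Fintype V]
    (G : SimpleGraph V) (v k ℓ μ : ℕ) (hSRG : G.IsSRGWith v k ℓ μ)
    (δ s c : ℝ) (h1 : (ℓ : ℝ) - μ - 2 * s = δ) (h2 : (k : ℝ) - μ + s ^ 2 = - δ * s)
    (h3 : μ - 2 * c * (k - s) + c ^ 2 * v = - δ * c) :
    (G.adjMatrix ℝ - s • (1 : Matrix V V ℝ) - c • Matrix.of (fun _ _ => (1 : ℝ))) *
    (G.adjMatrix ℝ - s • (1 : Matrix V V ℝ) - c • Matrix.of (fun _ _ => (1 : ℝ))) =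
    δ • (G.adjMatrix ℝ - s • (1 : Matrix V V ℝ) - c • Matrix.of (fun _ _ => (1 : ℝ))) := by
  have hA := hSRG.matrix_eq (α := ℝ)
  rw [sq, ← Nat.cast_smul_eq_nsmul ℝ k, ← Nat.cast_smul_eq_nsmul ℝ ℓ,
    ← Nat.cast_smul_eq_nsmul ℝ μ] at hA
  set J : Matrix V V ℝ := Matrix.of (fun _ _ => (1 : ℝ)) with hJ
  have hAJ : G.adjMatrix ℝ * J = (k : ℝ) • J := by
    ext i j
    simp [hJ, hSRG.regular i, SimpleGraph.adjMatrix_mul_apply]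
  have hJA : J * G.adjMatrix ℝ = (k : ℝ) • J := by
    ext i j
    simp [hJ, hSRG.regular j, SimpleGraph.mul_adjMatrix_apply]
  have hJJ : J * J = (v : ℝ) • J := by
    ext i j
    simp [hJ, Matrix.mul_apply, hSRG.card]
  simp only [sub_mul, mul_sub, smul_mul_assoc, mul_smul_comm, hA, hAJ, hJA, hJJ, mul_one, one_mul]
  ext i j
  simp only [Matrix.sub_apply, Matrix.add_apply, Matrix.smul_apply, SimpleGraph.adjMatrix_apply,
    SimpleGraph.compl_adj, Matrix.one_apply, smul_eq_mul, nsmul_eq_mul, hJ, Matrix.of_apply]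
  by_cases hij : i = j
  · subst hij
    simp
    linear_combination h2 + h3
  · by_cases ha : G.Adj i j
    · simp [hij, ha]
      linear_combination h1 + h3
    · simp [hij, ha]
      linear_combination h3

/-- A connected non-complete strongly regular graph with parameters
`(v, k, λ, μ)`, `μ > 0`, is the tangency graph of a unit ball packing in
dimension `f = (v-1+Δ)/2`: there is an injective map `ψ` of its vertices into
`EuclideanSpace ℝ (Fin f)` with pairwise distances at least `1`, with distance
exactly `1` precisely on adjacent pairs. -/
theorem srg_unit_ball_packing {V : Type*} [Fintype V]
    (G : SimpleGraph V) (v k ℓ μ : ℕ)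
    (hSRG : G.IsSRGWith v k ℓ μ) (hconn : G.Connected) (hnc : G ≠ ⊤) (hμ : 0 < μ)
    (δ r Δ : ℝ) (f : ℕ)
    (hδ : δ = Real.sqrt (((ℓ : ℝ) - μ) ^ 2 + 4 * ((k : ℝ) - μ)))
    (hr : r = (((ℓ : ℝ) - μ) + δ) / 2)
    (hΔ : Δ = (((v : ℝ) - 1) * ((μ : ℝ) - ℓ) - 2 * k) / δ)
    (hf : (f : ℝ) = ((v : ℝ) - 1 + Δ) / 2) :
    ∃ ψ : V → EuclideanSpace ℝ (Fin f),
      Function.Injective ψ ∧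
      (∀ u w : V, u ≠ w → 1 ≤ dist (ψ u) (ψ w)) ∧
      (∀ u w : V, u ≠ w → (dist (ψ u) (ψ w) = 1 ↔ G.Adj u w)) := by
  obtain ⟨p1, p2, p3, hv⟩ := srg_params G v k ℓ μ hSRG hnc hμ
  have q1 : (μ : ℝ) ≤ k := by exact_mod_cast p1
  have q2 : (ℓ : ℝ) + 2 ≤ k := by exact_mod_cast p2
  have qv : (0 : ℝ) < v := by exact_mod_cast hv
  have hD : 0 < ((ℓ : ℝ) - μ) ^ 2 + 4 * ((k : ℝ) - μ) := by
    rcases q1.lt_or_eq with h | h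
    · nlinarith [sq_nonneg ((ℓ : ℝ) - μ)]
    · nlinarith
  have hδ0 : 0 < δ := by rw [hδ]; exact Real.sqrt_pos.2 hD
  have hδ2 : δ ^ 2 = ((ℓ : ℝ) - μ) ^ 2 + 4 * ((k : ℝ) - μ) := by
    rw [hδ]; exact Real.sq_sqrt hD.le
  obtain ⟨s, hs⟩ : ∃ s : ℝ, s = ((ℓ : ℝ) - μ - δ) / 2 := ⟨_, rfl⟩
  have h1 : (ℓ : ℝ) - μ - 2 * s = δ := by rw [hs]; ring
  have h2 : (k : ℝ) - μ + s ^ 2 = - δ * s := by rw [hs]; linear_combination -hδ2 / 4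
  have hs1 : s < -1 := by
    have hx : (ℓ : ℝ) - μ + 2 < δ := by
      apply lt_of_pow_lt_pow_left₀ 2 hδ0.le
      rw [hδ2]; nlinarith
    rw [hs]; linarith
  obtain ⟨c, hc⟩ : ∃ c : ℝ, c = (k - s) / v := ⟨_, rfl⟩
  have hcv : c * v = k - s := by rw [hc]; field_simp
  have h3 : μ - 2 * c * (k - s) + c ^ 2 * v = - δ * c := by
    have : (v : ℝ) * (μ - 2 * c * (k - s) + c ^ 2 * v) = v * (- δ * c) := by
      have e : (v : ℝ) * μ = (k - s) * (k - s - δ) := by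
        linear_combination -p3 - h2 - k * h1
      linear_combination e + (c * v - (k - s) + δ) * hcv
    exact mul_left_cancel₀ qv.ne' this
  have hsq := srg_sq G v k ℓ μ hSRG δ s c h1 h2 h3
  set B := G.adjMatrix ℝ - s • (1 : Matrix V V ℝ) - c • Matrix.of (fun _ _ => (1 : ℝ)) with hB
  obtain ⟨φ, hφ⟩ := exists_gram_of_proj (δ⁻¹ • B)
    (by
      ext i j
      simp [hB, Matrix.one_apply, G.adj_comm i j, eq_comm])
    (by
      rw [smul_mul_smul_comm, hsq, smul_smul]
      congr 1
      field_simp) f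
    (by
      rw [hf, hΔ, Matrix.trace_smul, hB, Matrix.trace_sub, Matrix.trace_sub,
        SimpleGraph.trace_adjMatrix, Matrix.trace_smul, Matrix.trace_smul, Matrix.trace_one]
      simp only [Matrix.trace, Matrix.diag, Matrix.of_apply, Finset.sum_const, Finset.card_univ,
        hSRG.card, smul_eq_mul, nsmul_eq_mul, mul_one]
      rw [hcv]
      field_simp
      rw [← h1]
      ring)
  have hBd : ∀ i, B i i = - s - c := fun i => by simp [hB]
  have hBa : ∀ i j, G.Adj i j → B i j = 1 - c := fun i j h => by
    simp [hB, Matrix.one_apply, h, h.ne]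
  have hBn : ∀ i j, i ≠ j → ¬ G.Adj i j → B i j = - c := fun i j h h' => by
    simp [hB, Matrix.one_apply, h, h']
  have hd2a : ∀ u w, G.Adj u w → dist (φ u) (φ w) ^ 2 = 2 * (- s - 1) / δ := fun u w h => by
    rw [hφ]; simp only [Matrix.smul_apply, hBd, hBa u w h, smul_eq_mul]; field_simp; ring
  have hd2n : ∀ u w, u ≠ w → ¬ G.Adj u w → dist (φ u) (φ w) ^ 2 = 2 * (- s) / δ :=
    fun u w h h' => by
    rw [hφ]; simp only [Matrix.smul_apply, hBd, hBn u w h h', smul_eq_mul]; field_simp; ring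
  have ht0 : 0 < δ / (2 * (- s - 1)) := div_pos hδ0 (by linarith)
  have hne : - s - 1 ≠ 0 := by linarith
  have hscale : ∀ u w, dist (Real.sqrt (δ / (2 * (- s - 1))) • φ u)
      (Real.sqrt (δ / (2 * (- s - 1))) • φ w) ^ 2 = δ / (2 * (- s - 1)) * dist (φ u) (φ w) ^ 2 := by
    intro u w
    rw [dist_smul₀, mul_pow, Real.norm_of_nonneg (Real.sqrt_nonneg _), Real.sq_sqrt ht0.le]
  have ha : ∀ u w, G.Adj u w → dist (Real.sqrt (δ / (2 * (- s - 1))) • φ u)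
      (Real.sqrt (δ / (2 * (- s - 1))) • φ w) = 1 := by
    intro u w h
    rw [← sq_eq_sq₀ dist_nonneg zero_le_one, hscale, hd2a u w h]
    field_simp
  have hn : ∀ u w, u ≠ w → ¬ G.Adj u w → 1 < dist (Real.sqrt (δ / (2 * (- s - 1))) • φ u)
      (Real.sqrt (δ / (2 * (- s - 1))) • φ w) := by
    intro u w h h'
    apply lt_of_pow_lt_pow_left₀ 2 dist_nonneg
    rw [hscale, hd2n u w h h']
    have : δ / (2 * (- s - 1)) * (2 * (- s) / δ) = (- s) / (- s - 1) := by field_simp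
    rw [this, one_pow, one_lt_div (by linarith)]
    linarith
  have hge : ∀ u w : V, u ≠ w → 1 ≤ dist (Real.sqrt (δ / (2 * (- s - 1))) • φ u)
      (Real.sqrt (δ / (2 * (- s - 1))) • φ w) := by
    intro u w h
    by_cases h' : G.Adj u w
    · exact (ha u w h').ge
    · exact (hn u w h h').le
  refine ⟨fun u => Real.sqrt (δ / (2 * (- s - 1))) • φ u, ?_, hge, ?_⟩
  · intro u w h
    by_contra hne
    have := hge u w hne
    simp only at h
    rw [h, dist_self] at this
    linarith
  · intro u w h
    refine ⟨fun h1 => ?_, ha u w⟩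
    by_contra h'
    exact (hn u w h h').ne' h1
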